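/- Let (f_τ)_{τ∈ℝ} be a family of quasiperiodically forced circle homeomorphisms over the same irrational ω, with lifts (F_τ)_{τ∈ℝ} such that (τ,θ,x) ↦ F_{τ,θ}(x) is continuous and F_{τ,θ}(x) < F_{τ',θ}(x) for all (θ,x) ∈ T¹×ℝ whenever τ < τ'. Assume each F_τ has a fibered rotation number ρ(τ). If there exist τ₁ < τ₀ < τ₂ with ρ(τ₁) = ρ(τ₂) (in particular, if τ ↦ ρ(τ) is constant on a neighborhood of τ₀), then ω, ρ(τ₀) and 1 are rationally dependent: there exists (a,b,c) ∈ ℤ³ \ {(0,0,0)} with aω + bρ(τ₀) + c = 0. -/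

import Mathlib

open Filter Topology MeasureTheory
open scoped ENNReal

noncomputable section

/-- The circle `T¹ = ℝ/ℤ`. -/
abbrev T1 := AddCircle (1 : ℝ)

/-- Fiberwise iterate of the skew product: `fiberIter ω F n θ x = F^n_θ(x)`. -/
def fiberIter (ω : ℝ) (F : T1 → ℝ → ℝ) : ℕ → T1 → ℝ → ℝ
  | 0, _, x => x
  | n + 1, θ, x => fiberIter ω F n (θ + (ω : T1)) (F θ x)

/-- `F` is (the fiber part of) a lift of a quasiperiodically forced circle homeomorphism
over `ω`: `F(θ,x) = (θ+ω, F_θ(x))`, each `F_θ` a strictly increasing homeomorphism of `ℝ`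
commuting with `x ↦ x+1`. -/
structure IsQpfLift (ω : ℝ) (F : T1 → ℝ → ℝ) : Prop where
  cont : Continuous fun p : T1 × ℝ => F p.1 p.2
  mono : ∀ θ, StrictMono (F θ)
  surj : ∀ θ, Function.Surjective (F θ)
  per  : ∀ θ x, F θ (x + 1) = F θ x + 1

/-- `ρ` is the fibered rotation number of the lift `F`. -/
def HasRotNum (ω : ℝ) (F : T1 → ℝ → ℝ) (ρ : ℝ) : Prop :=
  ∀ θ x, Tendsto (fun n : ℕ => (fiberIter ω F n θ x - x) / n) atTop (𝓝 ρ)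

/-!
Suppose `F < G` are lifts with the same rotation number `ρ`, and that `ω`, `ρ`, `1` are rationally
independent, so that by Weyl's criterion the forward orbits of the translation by `(ω, ρ)` are
dense in the torus. Insert a lift `H` with `F < H < G`.

Some `F`-orbit never falls more than `1` below the translation orbit `n ↦ x + n * ρ`. By density
the translation orbit of any point comes close, within bounded time, to that of this slow point;
since `F < H` absorbs small shifts in both coordinates, every `H`-orbit stays above its
translation orbit up to a uniform constant. The height `⨅ n, (H^n_θ(x) - n * ρ)` is therefore
finite, and grows by at least `ρ` per step along `G`-orbits. Moreover it gains a definite extra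
amount within bounded time: by density, the translation orbit started at a suitable distance above
the current height soon enters an open set in which points lie almost as far above their height as
is possible anywhere. As the height is monotone in `x`, the `G`-orbit is then above that translation
orbit, and after the push by `G - H` it is so high that its own height must have grown. Hence the
rotation number of `G` exceeds `ρ`.
-/

section Kronecker

open UnitAddTorus

theorem lipschitzWith_birkhoffAverage (𝕜 : Type*) {X E : Type*} [RCLike 𝕜] [TopologicalSpace X]
    [CompactSpace X] [NormedAddCommGroup E] [NormedSpace 𝕜 E] (T : X → X) (N : ℕ) (x : X) :
    LipschitzWith 1 fun g : C(X, E) => birkhoffAverage 𝕜 T g N x := by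
  refine LipschitzWith.of_dist_le_mul fun g h => ?_
  have hsum : dist (birkhoffSum T g N x) (birkhoffSum T h N x) ≤ N * dist g h :=
    (dist_sum_sum_le _ _ _).trans <|
      (Finset.sum_le_card_nsmul _ _ _ fun n _ => ContinuousMap.dist_apply_le_dist _).trans_eq <| by
        rw [Finset.card_range, nsmul_eq_mul]
  calc dist (birkhoffAverage 𝕜 T g N x) (birkhoffAverage 𝕜 T h N x)
      = dist (birkhoffSum T g N x) (birkhoffSum T h N x) / N := by
        simp only [birkhoffAverage, dist_smul₀, norm_inv, RCLike.norm_natCast, inv_mul_eq_div]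
    _ ≤ dist g h := div_le_of_le_mul₀ N.cast_nonneg dist_nonneg (by rwa [mul_comm])
    _ = (1 : NNReal) * dist g h := by rw [NNReal.coe_one, one_mul]

theorem continuous_integral_continuousMap {X E : Type*} [TopologicalSpace X] [CompactSpace X]
    [MeasurableSpace X] [BorelSpace X] [NormedAddCommGroup E] [NormedSpace ℝ E]
    [SecondCountableTopologyEither X E] (μ : Measure X) [IsFiniteMeasure μ] :
    Continuous fun g : C(X, E) => ∫ x, g x ∂μ :=
  (continuous_integral.comp (ContinuousMap.toLp 1 μ ℝ).continuous).congr fun g =>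
    integral_congr_ae (ContinuousMap.coeFn_toLp μ g)

theorem tendsto_birkhoffAverage_integral_of_span {𝕜 X : Type*} [RCLike 𝕜] [TopologicalSpace X]
    [CompactSpace X] [MeasurableSpace X] [BorelSpace X] {μ : Measure X} [IsFiniteMeasure μ]
    {T : X → X} {x : X} {s : Set C(X, 𝕜)} (hs : (Submodule.span 𝕜 s).topologicalClosure = ⊤)
    (hlim : ∀ g ∈ s, Tendsto (birkhoffAverage 𝕜 T g · x) atTop (𝓝 (∫ y, g y ∂μ)))
    (g : C(X, 𝕜)) : Tendsto (birkhoffAverage 𝕜 T g · x) atTop (𝓝 (∫ y, g y ∂μ)) := by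
  set S := {g : C(X, 𝕜) | Tendsto (birkhoffAverage 𝕜 T g · x) atTop (𝓝 (∫ y, g y ∂μ))}
  have hclosed : IsClosed S :=
    (LipschitzWith.uniformEquicontinuous _ 1
      (lipschitzWith_birkhoffAverage 𝕜 T · x)).equicontinuous.isClosed_setOfPred_tendsto
        (continuous_integral_continuousMap μ)
  have hspan : (Submodule.span 𝕜 s : Set C(X, 𝕜)) ⊆ S := by
    intro g hg
    induction hg using Submodule.span_induction with
    | mem g hg => exact hlim g hg
    | zero => simp [S, birkhoffAverage, birkhoffSum]
    | add f g _ _ hf hg =>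
      have hfg : ∫ y, (f + g) y ∂μ = (∫ y, f y ∂μ) + ∫ y, g y ∂μ :=
        integral_add (f.continuous.integrable_of_hasCompactSupport (.of_compactSpace _))
          (g.continuous.integrable_of_hasCompactSupport (.of_compactSpace _))
      rw [Set.mem_ofPred_eq, hfg, ContinuousMap.coe_add, birkhoffAverage_add]
      exact hf.add hg
    | smul c f _ hf =>
      have hcf : ∫ y, (c • f) y ∂μ = c • ∫ y, f y ∂μ := integral_smul c f
      rw [Set.mem_ofPred_eq, hcf]
      refine (hf.const_smul c).congr fun N => ?_
      simp only [birkhoffAverage, birkhoffSum, ContinuousMap.smul_apply, ← Finset.smul_sum]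
      exact smul_comm ..
  refine closure_minimal hspan hclosed ?_
  rw [← Submodule.topologicalClosure_coe, hs]
  exact Set.mem_univ g

variable {d : Type*} [Fintype d]

theorem mFourier_apply_add (m : d → ℤ) (x y : UnitAddTorus d) :
    mFourier m (x + y) = mFourier m x * mFourier m y := by
  simp only [mFourier, ContinuousMap.coe_mk, fourier_apply, Pi.add_apply, smul_add,
    AddCircle.toCircle_add, Circle.coe_mul, Finset.prod_mul_distrib]

theorem mFourier_apply_add_nsmul (m : d → ℤ) (x y : UnitAddTorus d) (n : ℕ) :
    mFourier m (x + n • y) = mFourier m x * mFourier m y ^ n := by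
  induction n with
  | zero => simp only [zero_nsmul, add_zero, pow_zero, mul_one]
  | succ n ih => rw [succ_nsmul, ← add_assoc, mFourier_apply_add, ih, pow_succ, mul_assoc]

theorem norm_mFourier_apply (m : d → ℤ) (x : UnitAddTorus d) : ‖mFourier m x‖ = 1 := by
  simp only [mFourier, ContinuousMap.coe_mk, fourier_apply, norm_prod, Circle.norm_coe,
    Finset.prod_const_one]

theorem mFourier_coe_eq_one_iff (m : d → ℤ) (v : d → ℝ) :
    mFourier m (fun i => (v i : UnitAddCircle)) = 1 ↔ ∃ n : ℤ, ∑ i, m i * v i = n := by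
  have hexp : mFourier m (fun i => (v i : UnitAddCircle)) =
      Complex.exp (((∑ i, m i * v i : ℝ) : ℂ) * (2 * Real.pi * Complex.I)) := by
    simp only [mFourier, ContinuousMap.coe_mk, fourier_coe_apply, ← Complex.exp_sum]
    push_cast
    rw [Finset.sum_mul]
    exact congrArg _ (Finset.sum_congr rfl fun i _ => by ring)
  rw [hexp, Complex.exp_eq_one_iff]
  refine exists_congr fun n => ?_
  rw [mul_left_inj' Complex.two_pi_I_ne_zero]
  exact_mod_cast Iff.rfl

variable {α : UnitAddTorus d}

theorem integral_mFourier_eq_zero {m : d → ℤ} (hα : mFourier m α ≠ 1) :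
    ∫ x, mFourier m x = 0 := by
  have hinv : (∫ x, mFourier m x) = (∫ x, mFourier m x) * mFourier m α := by
    rw [← integral_mul_const, ← integral_add_right_eq_self _ α]
    simp only [mFourier_apply_add]
  by_contra h
  exact hα (mul_left_cancel₀ h (by rw [← hinv, mul_one]))

theorem tendsto_birkhoffAverage_mFourier {m : d → ℤ} (hα : mFourier m α ≠ 1)
    (x : UnitAddTorus d) :
    Tendsto (fun N => birkhoffAverage ℂ (· + α) (mFourier m) N x) atTop (𝓝 0) := by
  set z := mFourier m α
  refine squeeze_zero_norm (fun N => ?_)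
    (tendsto_const_div_atTop_nhds_zero_nat (2 / ‖z - 1‖))
  have hsum : birkhoffSum (· + α) (mFourier m) N x = mFourier m x * ((z ^ N - 1) / (z - 1)) := by
    simp only [birkhoffSum, add_right_iterate_apply, mFourier_apply_add_nsmul, ← Finset.mul_sum,
      geom_sum_eq hα, z]
  have hpow : ‖z ^ N - 1‖ ≤ 2 := (norm_sub_le _ _).trans_eq <| by
    rw [norm_pow, norm_mFourier_apply, one_pow, norm_one, one_add_one_eq_two]
  rw [birkhoffAverage, hsum, norm_smul, norm_inv, Complex.norm_natCast, inv_mul_eq_div, norm_mul,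
    norm_mFourier_apply, one_mul, norm_div]
  gcongr

theorem tendsto_birkhoffAverage_integral (hα : ∀ m : d → ℤ, m ≠ 0 → mFourier m α ≠ 1)
    (g : C(UnitAddTorus d, ℂ)) (x : UnitAddTorus d) :
    Tendsto (fun N => birkhoffAverage ℂ (· + α) g N x) atTop (𝓝 (∫ y, g y)) := by
  refine tendsto_birkhoffAverage_integral_of_span span_mFourier_closure_eq_top
    (Set.forall_mem_range.2 fun m => ?_) g
  rcases eq_or_ne m 0 with rfl | hm
  · have hone : ∫ y, (1 : C(UnitAddTorus d, ℂ)) y = 1 := by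
      have : IsProbabilityMeasure (volume : Measure UnitAddCircle) :=
        ⟨UnitAddCircle.measure_univ⟩
      simp only [ContinuousMap.one_apply, integral_const, probReal_univ, one_smul]
    rw [mFourier_zero, hone]
    refine tendsto_const_nhds.congr' ((eventually_ne_atTop 0).mono fun N hN => ?_)
    have hinvariant : ⇑(1 : C(UnitAddTorus d, ℂ)) ∘ (· + α) = ⇑(1 : C(UnitAddTorus d, ℂ)) := rfl
    exact (congrFun (birkhoffAverage_of_comp_eq ℂ hinvariant (Nat.cast_ne_zero.2 hN)) x).symm
  · rw [integral_mFourier_eq_zero (hα m hm)]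
    exact tendsto_birkhoffAverage_mFourier (hα m hm) x

theorem denseRange_nsmul_of_mFourier_ne_one (hα : ∀ m : d → ℤ, m ≠ 0 → mFourier m α ≠ 1) :
    DenseRange fun n : ℕ => n • α := by
  set K := closure (Set.range fun n : ℕ => n • α)
  have horbit (n : ℕ) : Metric.infDist (n • α) K = 0 :=
    Metric.infDist_zero_of_mem (subset_closure (Set.mem_range_self n))
  have hintegral : ∫ y, Metric.infDist y K = 0 := by
    let g : C(UnitAddTorus d, ℂ) := ⟨fun y => (Metric.infDist y K : ℂ), by fun_prop⟩
    have havg (N : ℕ) : birkhoffAverage ℂ (· + α) g N 0 = 0 := by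
      simp [birkhoffAverage, birkhoffSum, g, horbit]
    have hlim : ∫ y, (Metric.infDist y K : ℂ) = 0 :=
      tendsto_nhds_unique (tendsto_birkhoffAverage_integral hα g 0)
        (tendsto_const_nhds.congr fun N => (havg N).symm)
    exact_mod_cast integral_complex_ofReal.symm.trans hlim
  intro y
  refine (isClosed_closure.mem_iff_infDist_zero (Set.range_nonempty _).closure).2 ?_
  by_contra hy
  refine hintegral.not_gt ?_
  exact (Metric.continuous_infDist_pt K).integral_pos_of_hasCompactSupport_nonneg_nonzero
    (.of_compactSpace _) (fun _ => Metric.infDist_nonneg) hy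

theorem denseRange_nsmul_of_linearIndependent {ω ρ : ℝ} (h : LinearIndependent ℤ ![ω, ρ, 1]) :
    DenseRange fun n : ℕ => n • ((ω, ρ) : T1 × T1) := by
  have hchar (m : Fin 2 → ℤ) (hm : m ≠ 0) :
      mFourier m (fun i => ((![ω, ρ] i : ℝ) : UnitAddCircle)) ≠ 1 := by
    rw [Ne, mFourier_coe_eq_one_iff, Fin.sum_univ_two]
    rintro ⟨n, hn⟩
    have hrel : m 0 • ω + m 1 • ρ + -n • (1 : ℝ) = 0 := by
      simp only [Matrix.cons_val_zero, Matrix.cons_val_one] at hn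
      simp only [zsmul_eq_mul, Int.cast_neg]
      linarith
    have h0 := Fintype.linearIndependent_iff.1 h ![m 0, m 1, -n] (by
      simpa [Fin.sum_univ_three] using hrel)
    exact hm (funext (Fin.forall_fin_two.2 ⟨h0 0, h0 1⟩))
  have hsurj : Function.Surjective fun z : UnitAddTorus (Fin 2) => (z 0, z 1) :=
    fun p => ⟨![p.1, p.2], rfl⟩
  exact hsurj.denseRange.comp (denseRange_nsmul_of_mFourier_ne_one hchar) (by fun_prop)

end Kronecker

theorem exists_forall_exists_le_mem {X : Type*} [TopologicalSpace X] [CompactSpace X]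
    {U : ℕ → Set X} (hU : ∀ n, IsOpen (U n)) (hcover : ∀ x, ∃ n, x ∈ U n) :
    ∃ N, ∀ x, ∃ n ≤ N, x ∈ U n := by
  obtain ⟨t, ht⟩ := isCompact_univ.elim_finite_subcover U hU
    fun x _ => Set.mem_iUnion.2 (hcover x)
  refine ⟨t.sup id, fun x => ?_⟩
  obtain ⟨n, hn, hx⟩ := Set.mem_iUnion₂.1 (ht (Set.mem_univ x))
  exact ⟨n, Finset.le_sup (f := id) hn, hx⟩

theorem exists_forall_exists_add_nsmul_mem {X : Type*} [TopologicalSpace X] [CompactSpace X]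
    [AddGroup X] [ContinuousAdd X] {α : X} (hα : DenseRange fun n : ℕ => n • α)
    {U : Set X} (hU : IsOpen U) (hne : U.Nonempty) :
    ∃ N : ℕ, ∀ x, ∃ n ≤ N, x + n • α ∈ U := by
  refine exists_forall_exists_le_mem (U := fun n => (· + n • α) ⁻¹' U)
    (fun n => hU.preimage (continuous_add_const _)) fun x => ?_
  obtain ⟨u, hu⟩ := hne
  exact hα.exists_mem_open (hU.preimage (continuous_const_add x)) ⟨-x + u, by simpa using hu⟩

theorem exists_forall_exists_translate_mem {ω ρ : ℝ}
    (hdense : DenseRange fun n : ℕ => n • ((ω, ρ) : T1 × T1)) {U : Set (T1 × T1)} (hU : IsOpen U)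
    (hne : U.Nonempty) :
    ∃ N : ℕ, ∀ (θ : T1) (x : ℝ), ∃ n ≤ N, (θ + n • (ω : T1), ((x + n * ρ : ℝ) : T1)) ∈ U := by
  obtain ⟨N, hN⟩ := exists_forall_exists_add_nsmul_mem hdense hU hne
  refine ⟨N, fun θ x => ?_⟩
  obtain ⟨n, hn, hmem⟩ := hN (θ, x)
  refine ⟨n, hn, ?_⟩
  rwa [← nsmul_eq_mul, AddCircle.coe_add, AddCircle.coe_nsmul]

theorem lt_of_tendsto_div_of_forall_exists_gain {a b : ℕ → ℝ} {ρ σ η : ℝ} {N : ℕ} (hη : 0 < η)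
    (hba : ∀ n, b n ≤ a n) (ha : Tendsto (fun n : ℕ => a n / n) atTop (𝓝 σ))
    (hb : ∀ n, ∃ j, 1 ≤ j ∧ j ≤ N ∧ b n + j * ρ + η ≤ b (n + j)) : ρ < σ := by
  have hN : 0 < (N : ℝ) := by
    obtain ⟨j, hj, hjN, -⟩ := hb 0
    exact_mod_cast hj.trans hjN
  have hreach (k : ℕ) : ∃ n ≥ k, b 0 + n * (ρ + η / N) ≤ b n := by
    induction k with
    | zero => exact ⟨0, le_rfl, by simp⟩
    | succ k ih =>
      obtain ⟨n, hn, hbn⟩ := ih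
      obtain ⟨j, hj, hjN, hbj⟩ := hb n
      have hgain : j * (η / N) ≤ η := by
        rw [mul_div_left_comm]
        exact mul_le_of_le_one_right hη.le ((div_le_one hN).2 (by exact_mod_cast hjN))
      refine ⟨n + j, by lia, ?_⟩
      push_cast
      linarith
  have hlower : Tendsto (fun n : ℕ => b 0 / n + (ρ + η / N)) atTop (𝓝 (ρ + η / N)) := by
    simpa only [zero_add] using
      (tendsto_const_div_atTop_nhds_zero_nat (b 0)).add_const (ρ + η / N)
  have hfreq : ∃ᶠ n : ℕ in atTop, b 0 / n + (ρ + η / N) ≤ a n / n := by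
    refine frequently_atTop.2 fun k => ?_
    obtain ⟨n, hn, hbn⟩ := hreach (k + 1)
    have hn0 : 0 < (n : ℝ) := by exact_mod_cast (Nat.succ_pos k).trans_le hn
    refine ⟨n, (Nat.le_succ k).trans hn, (le_div_iff₀ hn0).2 ?_⟩
    rw [add_mul, div_mul_cancel₀ _ hn0.ne', mul_comm _ (n : ℝ)]
    exact hbn.trans (hba n)
  calc ρ < ρ + η / N := lt_add_of_pos_right ρ (div_pos hη hN)
    _ ≤ σ := le_of_tendsto_of_tendsto_of_frequently hlower ha hfreq

section FiberedDynamics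

variable {ω ρ σ : ℝ} {F G : T1 → ℝ → ℝ}

theorem fiberIter_add (ω : ℝ) (F : T1 → ℝ → ℝ) (m n : ℕ) (θ : T1) (x : ℝ) :
    fiberIter ω F (m + n) θ x = fiberIter ω F n (θ + m • (ω : T1)) (fiberIter ω F m θ x) := by
  induction m generalizing θ x with
  | zero => rw [zero_add, zero_nsmul, add_zero, fiberIter]
  | succ m ih => rw [Nat.add_right_comm, fiberIter, ih, fiberIter, succ_nsmul', add_assoc]

theorem fiberIter_succ' (ω : ℝ) (F : T1 → ℝ → ℝ) (n : ℕ) (θ : T1) (x : ℝ) :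
    fiberIter ω F (n + 1) θ x = F (θ + n • (ω : T1)) (fiberIter ω F n θ x) :=
  fiberIter_add ω F n 1 θ x

namespace IsQpfLift

theorem iterate (hF : IsQpfLift ω F) (n : ℕ) : IsQpfLift (n * ω) (fiberIter ω F n) := by
  induction n with
  | zero => exact ⟨continuous_snd, fun _ => strictMono_id, fun _ => Function.surjective_id,
      fun _ _ => rfl⟩
  | succ n ih =>
    refine ⟨?_, fun θ => (ih.mono _).comp (hF.mono θ), fun θ => (ih.surj _).comp (hF.surj θ),
      fun θ x => ?_⟩
    · exact ih.cont.comp ((continuous_fst.add continuous_const).prodMk hF.cont)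
    · rw [fiberIter, hF.per, ih.per, fiberIter]

theorem add_const (hF : IsQpfLift ω F) (c : ℝ) : IsQpfLift ω fun θ x => F θ x + c where
  cont := hF.cont.add continuous_const
  mono θ := (hF.mono θ).add_const c
  surj θ := (Equiv.addRight c).surjective.comp (hF.surj θ)
  per θ x := by rw [hF.per, add_right_comm]

theorem apply_sub_intCast (hF : IsQpfLift ω F) (θ : T1) (x : ℝ) (n : ℤ) :
    F θ (x - n) = F θ x - n :=
  AddConstMapClass.map_sub_int (⟨F θ, hF.per θ⟩ : AddConstMap ℝ ℝ 1 1) x n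

/-- The displacement `(θ, x) ↦ F_θ(x) - x` of a lift. It is `1`-periodic in `x`, and is encoded
as a continuous function on the torus, which makes it amenable to compactness arguments. -/
def displacement (hF : IsQpfLift ω F) : C(T1 × T1, ℝ) where
  toFun p := Function.Periodic.lift (f := fun x => F p.1 x - x) (c := 1)
    (fun x => show F p.1 (x + 1) - (x + 1) = _ by rw [hF.per, add_sub_add_right_eq_sub]) p.2
  continuous_toFun := by
    rw [← (IsOpenQuotientMap.id.prodMap QuotientAddGroup.isOpenQuotientMap_mk).continuous_comp_iff]
    exact hF.cont.sub continuous_snd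

theorem displacement_apply_coe (hF : IsQpfLift ω F) (θ : T1) (x : ℝ) :
    hF.displacement (θ, x) = F θ x - x := rfl

theorem displacement_lt_displacement (hF : IsQpfLift ω F) (hG : IsQpfLift ω G)
    (hFG : ∀ θ x, F θ x < G θ x) (p : T1 × T1) : hF.displacement p < hG.displacement p := by
  obtain ⟨θ, x⟩ := p
  induction x using QuotientAddGroup.induction_on with
  | H x => exact sub_lt_sub_right (hFG θ x) x

theorem exists_pos_forall_add_le (hF : IsQpfLift ω F) (hG : IsQpfLift ω G)
    (hFG : ∀ θ x, F θ x < G θ x) : ∃ ε > 0, ∀ θ x, F θ x + ε ≤ G θ x := by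
  obtain ⟨ε, hε, hgap⟩ := isCompact_univ.exists_forall_le'
    (hG.displacement - hF.displacement).continuous.continuousOn
    fun p _ => sub_pos.2 (displacement_lt_displacement hF hG hFG p)
  refine ⟨ε, hε, fun θ x => ?_⟩
  have hgap_x := hgap (θ, x) (Set.mem_univ _)
  rw [ContinuousMap.sub_apply, displacement_apply_coe, displacement_apply_coe] at hgap_x
  linarith

theorem eventually_displacement_lt_displacement_add (hF : IsQpfLift ω F) (hG : IsQpfLift ω G)
    (hFG : ∀ θ x, F θ x < G θ x) :
    ∀ᶠ q in 𝓝 (0 : T1 × T1), ∀ p, hF.displacement p < hG.displacement (p + q) := by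
  have hlocal (p : T1 × T1) : ∀ᶠ r : (T1 × T1) × (T1 × T1) in 𝓝 (0, p),
      hF.displacement r.2 < hG.displacement (r.2 + r.1) := by
    refine ContinuousAt.eventually_lt (by fun_prop) (by fun_prop) ?_
    simpa only [add_zero] using displacement_lt_displacement hF hG hFG p
  simpa only [Set.mem_univ, true_imp_iff] using
    isCompact_univ.eventually_forall_of_forall_eventually fun p _ => hlocal p

theorem exists_isOpen_forall_add_le (hF : IsQpfLift ω F) (hG : IsQpfLift ω G)
    (hFG : ∀ θ x, F θ x < G θ x) :
    ∃ V : Set (T1 × T1), IsOpen V ∧ 0 ∈ V ∧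
      ∀ t (c : ℝ), (t, (c : T1)) ∈ V → ∀ θ x, F θ x + c ≤ G (θ + t) (x + c) := by
  obtain ⟨V, hV, hVopen, h0⟩ :=
    eventually_nhds_iff.1 (eventually_displacement_lt_displacement_add hF hG hFG)
  refine ⟨V, hVopen, h0, fun t c htc θ x => ?_⟩
  have hlt : F θ x - x < G (θ + t) (x + c) - (x + c) := hV _ htc (θ, x)
  linarith

theorem fiberIter_add_le (hG : IsQpfLift ω G) {t : T1} {c : ℝ}
    (hFG : ∀ θ x, F θ x + c ≤ G (θ + t) (x + c)) (n : ℕ) (θ : T1) (x : ℝ) :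
    fiberIter ω F n θ x + c ≤ fiberIter ω G n (θ + t) (x + c) := by
  induction n generalizing θ x with
  | zero => exact le_rfl
  | succ n ih =>
    calc fiberIter ω F (n + 1) θ x + c
        ≤ fiberIter ω G n (θ + ω + t) (F θ x + c) := ih _ _
      _ ≤ fiberIter ω G n (θ + t + ω) (G (θ + t) (x + c)) := by
        rw [add_right_comm]
        exact ((hG.iterate n).mono _).monotone (hFG θ x)

theorem fiberIter_le_fiberIter (hG : IsQpfLift ω G) (hFG : ∀ θ x, F θ x ≤ G θ x) (n : ℕ)
    (θ : T1) (x : ℝ) : fiberIter ω F n θ x ≤ fiberIter ω G n θ x := by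
  simpa only [add_zero] using
    hG.fiberIter_add_le (t := 0) (c := 0) (by simpa only [add_zero] using hFG) n θ x

theorem exists_forall_le_fiberIter (hF : IsQpfLift ω F) (ρ : ℝ) (N : ℕ) :
    ∃ M : ℤ, ∀ n ≤ N, ∀ θ x, x + n * ρ - M ≤ fiberIter ω F n θ x := by
  have hlarge (n : ℕ) : ∀ᶠ M : ℤ in atTop, ∀ θ x, x + n * ρ - M ≤ fiberIter ω F n θ x := by
    obtain ⟨b, hb⟩ := (isCompact_range (hF.iterate n).displacement.continuous).bddBelow
    filter_upwards [tendsto_intCast_atTop_atTop.eventually_ge_atTop (n * ρ - b)] with M hM θ x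
    have hbx : b ≤ fiberIter ω F n θ x - x := hb ⟨(θ, x), rfl⟩
    linarith
  exact ((Set.finite_Iic N).eventually_all.2 fun n _ => hlarge n).exists

theorem exists_forall_sub_one_le_fiberIter (hF : IsQpfLift ω F) (hρ : HasRotNum ω F ρ) :
    ∃ θ x, ∀ n : ℕ, x + n * ρ - 1 ≤ fiberIter ω F n θ x := by
  by_contra! hfast
  obtain ⟨N, hN⟩ := exists_forall_exists_le_mem
    (U := fun n : ℕ => {p | (hF.iterate n).displacement p < n * ρ - 1})
    (fun n => isOpen_lt (hF.iterate n).displacement.continuous continuous_const) fun ⟨θ, z⟩ => by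
      obtain ⟨x, rfl⟩ := QuotientAddGroup.mk_surjective z
      obtain ⟨n, hn⟩ := hfast θ x
      refine ⟨n, ?_⟩
      rw [Set.mem_ofPred_eq, displacement_apply_coe]
      linarith
  have hdrop (n : ℕ) : ∃ j, 1 ≤ j ∧ j ≤ N ∧
      -fiberIter ω F n 0 0 + j * -ρ + 1 ≤ -fiberIter ω F (n + j) 0 0 := by
    obtain ⟨j, hjN, hj⟩ := hN (0 + n • (ω : T1), fiberIter ω F n 0 0)
    rw [Set.mem_ofPred_eq, displacement_apply_coe, ← fiberIter_add] at hj
    refine ⟨j, Nat.one_le_iff_ne_zero.2 ?_, hjN, by linarith⟩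
    rintro rfl
    simp only [add_zero, sub_self, Nat.cast_zero, zero_mul] at hj
    linarith
  have hlim : Tendsto (fun n : ℕ => -fiberIter ω F n 0 0 / n) atTop (𝓝 (-ρ)) := by
    simpa only [sub_zero, neg_div] using (hρ 0 0).neg
  exact lt_irrefl _ (lt_of_tendsto_div_of_forall_exists_gain one_pos (fun _ => le_rfl) hlim hdrop)

end IsQpfLift

/-- The orbits of `F` fall behind the rigid translation by `ρ` by at most a uniform constant. This
one-sided bounded deviation is what makes `orbitHeight` meaningful. -/
def DriftBddBelow (ω : ℝ) (F : T1 → ℝ → ℝ) (ρ : ℝ) : Prop :=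
  ∃ C, ∀ (n : ℕ) θ x, x + n * ρ - C ≤ fiberIter ω F n θ x

theorem driftBddBelow_of_lt (hF : IsQpfLift ω F) (hG : IsQpfLift ω G)
    (hFG : ∀ θ x, F θ x < G θ x) (hρ : HasRotNum ω F ρ)
    (hdense : DenseRange fun n : ℕ => n • ((ω, ρ) : T1 × T1)) : DriftBddBelow ω G ρ := by
  obtain ⟨θ₀, x₀, hslow⟩ := hF.exists_forall_sub_one_le_fiberIter hρ
  obtain ⟨V, hV, h0, hcompare⟩ := hF.exists_isOpen_forall_add_le hG hFG
  obtain ⟨N, hN⟩ := exists_forall_exists_translate_mem hdense hV ⟨0, h0⟩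
  obtain ⟨M, hM⟩ := hG.exists_forall_le_fiberIter ρ N
  refine ⟨M + 1, fun n θ x => ?_⟩
  obtain ⟨j, hjN, hj⟩ := hN (θ - θ₀) (x - x₀)
  rcases le_total n j with hnj | hjn
  · linarith [hM n (hnj.trans hjN) θ x]
  obtain ⟨m, rfl⟩ := Nat.exists_eq_add_of_le hjn
  set c := x - x₀ + j * ρ
  calc x + (j + m : ℕ) * ρ - (M + 1)
      = x₀ + m * ρ - 1 + c - M := by push_cast; ring
    _ ≤ fiberIter ω F m θ₀ x₀ + c - M := by gcongr; exact hslow m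
    _ ≤ fiberIter ω G m (θ₀ + (θ - θ₀ + j • (ω : T1))) (x₀ + c) - M := by
      gcongr
      exact hG.fiberIter_add_le (hcompare _ c hj) m θ₀ x₀
    _ = fiberIter ω G m (θ + j • (ω : T1)) (x + j * ρ - M) := by
      rw [(hG.iterate m).apply_sub_intCast, ← add_assoc, add_sub_cancel, ← add_assoc,
        add_sub_cancel]
    _ ≤ fiberIter ω G m (θ + j • (ω : T1)) (fiberIter ω G j θ x) :=
      ((hG.iterate m).mono _).monotone (hM j hjN θ x)
    _ = fiberIter ω G (j + m) θ x := (fiberIter_add ω G j m θ x).symm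

/-- The largest `h` such that the forward `F`-orbit of `(θ, x)` never falls below the translation
orbit `n ↦ h + n * ρ`. It serves to measure the advance over that translation of orbits of lifts
above `F`, and has the junk value `0` if there is no such `h`, which `DriftBddBelow` excludes. -/
def orbitHeight (ω : ℝ) (F : T1 → ℝ → ℝ) (ρ : ℝ) (θ : T1) (x : ℝ) : ℝ :=
  ⨅ n : ℕ, (fiberIter ω F n θ x - n * ρ)

namespace DriftBddBelow

theorem bddBelow_range (h : DriftBddBelow ω F ρ) (θ : T1) (x : ℝ) :
    BddBelow (Set.range fun n : ℕ => fiberIter ω F n θ x - n * ρ) := by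
  obtain ⟨C, hC⟩ := h
  refine ⟨x - C, Set.forall_mem_range.2 fun n => ?_⟩
  linarith [hC n θ x]

theorem orbitHeight_le_fiberIter (h : DriftBddBelow ω F ρ) (n : ℕ) (θ : T1) (x : ℝ) :
    orbitHeight ω F ρ θ x ≤ fiberIter ω F n θ x - n * ρ :=
  ciInf_le (h.bddBelow_range θ x) n

theorem orbitHeight_le_self (h : DriftBddBelow ω F ρ) (θ : T1) (x : ℝ) :
    orbitHeight ω F ρ θ x ≤ x := by
  simpa only [fiberIter, Nat.cast_zero, zero_mul, sub_zero] using h.orbitHeight_le_fiberIter 0 θ x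

theorem exists_forall_sub_le_orbitHeight (h : DriftBddBelow ω F ρ) :
    ∃ C, ∀ θ x, x - C ≤ orbitHeight ω F ρ θ x := by
  obtain ⟨C, hC⟩ := h
  exact ⟨C, fun θ x => le_ciInf fun n => by linarith [hC n θ x]⟩

theorem monotone_orbitHeight (h : DriftBddBelow ω F ρ) (hF : IsQpfLift ω F) (θ : T1) :
    Monotone (orbitHeight ω F ρ θ) := fun x _ hxy =>
  ciInf_mono (h.bddBelow_range θ x) fun n =>
    sub_le_sub_right (((hF.iterate n).mono θ).monotone hxy) _

theorem orbitHeight_add_le (h : DriftBddBelow ω F ρ) (θ : T1) (x : ℝ) :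
    orbitHeight ω F ρ θ x + ρ ≤ orbitHeight ω F ρ (θ + ω) (F θ x) := by
  refine le_ciInf fun n => ?_
  have hle := h.orbitHeight_le_fiberIter (n + 1) θ x
  rw [fiberIter] at hle
  push_cast at hle
  linarith

theorem orbitHeight_add_le_of_le (h : DriftBddBelow ω F ρ) (hF : IsQpfLift ω F)
    (hFG : ∀ θ x, F θ x ≤ G θ x) (n : ℕ) (θ : T1) (x : ℝ) :
    orbitHeight ω F ρ θ x + n * ρ ≤ orbitHeight ω F ρ (θ + n • (ω : T1)) (fiberIter ω G n θ x) := by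
  induction n with
  | zero => simp only [Nat.cast_zero, zero_mul, add_zero, zero_nsmul, fiberIter, le_refl]
  | succ n ih =>
    set θ' := θ + n • (ω : T1)
    set x' := fiberIter ω G n θ x
    calc orbitHeight ω F ρ θ x + (n + 1 : ℕ) * ρ
        = orbitHeight ω F ρ θ x + n * ρ + ρ := by push_cast; ring
      _ ≤ orbitHeight ω F ρ θ' x' + ρ := by gcongr
      _ ≤ orbitHeight ω F ρ (θ' + ω) (F θ' x') := h.orbitHeight_add_le θ' x'
      _ ≤ orbitHeight ω F ρ (θ' + ω) (G θ' x') := h.monotone_orbitHeight hF _ (hFG θ' x')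
      _ = orbitHeight ω F ρ (θ + (n + 1) • (ω : T1)) (fiberIter ω G (n + 1) θ x) := by
        rw [fiberIter_succ', succ_nsmul, add_assoc]

theorem exists_isOpen_orbitHeight_lt (h : DriftBddBelow ω F ρ) (hF : IsQpfLift ω F) {ε : ℝ}
    (hε : 0 < ε) :
    ∃ K, (∀ θ x, x - K ≤ orbitHeight ω F ρ θ x) ∧ ∃ U : Set (T1 × T1), IsOpen U ∧ U.Nonempty ∧
      ∀ θ (x : ℝ), (θ, (x : T1)) ∈ U → orbitHeight ω F ρ θ x < x - K + ε := by
  let depth (p : T1 × ℝ) : ℝ := p.2 - orbitHeight ω F ρ p.1 p.2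
  have hbdd : BddAbove (Set.range depth) := by
    obtain ⟨C, hC⟩ := h.exists_forall_sub_le_orbitHeight
    exact ⟨C, Set.forall_mem_range.2 fun p => sub_le_comm.1 (hC p.1 p.2)⟩
  obtain ⟨⟨θ₀, x₀⟩, hdeep⟩ := exists_lt_of_lt_ciSup (sub_lt_self (⨆ p, depth p) hε)
  obtain ⟨n, hn⟩ : ∃ n : ℕ, fiberIter ω F n θ₀ x₀ - n * ρ < x₀ - (⨆ p, depth p) + ε :=
    exists_lt_of_ciInf_lt (show orbitHeight ω F ρ θ₀ x₀ < _ by linarith)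
  refine ⟨⨆ p, depth p, fun θ x => sub_le_comm.1 (le_ciSup hbdd (θ, x)),
    {p | (hF.iterate n).displacement p < n * ρ - (⨆ p, depth p) + ε},
    isOpen_lt (hF.iterate n).displacement.continuous continuous_const, ⟨(θ₀, x₀), ?_⟩,
    fun θ x hx => ?_⟩
  · rw [Set.mem_ofPred_eq, IsQpfLift.displacement_apply_coe]
    linarith
  · rw [Set.mem_ofPred_eq, IsQpfLift.displacement_apply_coe] at hx
    linarith [h.orbitHeight_le_fiberIter n θ x]

theorem exists_forall_exists_orbitHeight_gain (h : DriftBddBelow ω F ρ) (hF : IsQpfLift ω F)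
    {ε : ℝ} (hε : 0 < ε) (hFG : ∀ θ x, F θ x + ε ≤ G θ x)
    (hdense : DenseRange fun n : ℕ => n • ((ω, ρ) : T1 × T1)) :
    ∃ N, ∀ θ x, ∃ j : ℕ, 1 ≤ j ∧ j ≤ N ∧ orbitHeight ω F ρ θ x + j * ρ + ε / 2 ≤
      orbitHeight ω F ρ (θ + j • (ω : T1)) (fiberIter ω G j θ x) := by
  obtain ⟨K, hK, U, hU, hne, hlow⟩ := h.exists_isOpen_orbitHeight_lt hF (half_pos hε)
  obtain ⟨N, hN⟩ := exists_forall_exists_translate_mem hdense hU hne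
  refine ⟨N + 1, fun θ x => ?_⟩
  obtain ⟨i, hiN, hi⟩ := hN (θ + ω) (orbitHeight ω F ρ θ x + ρ + K - ε / 2)
  refine ⟨i + 1, i.succ_pos, Nat.succ_le_succ hiN, ?_⟩
  set θ' := θ + (i + 1) • (ω : T1) with hθ'
  set y := orbitHeight ω F ρ θ x + (i + 1 : ℕ) * ρ with hy
  set x' := F (θ + i • (ω : T1)) (fiberIter ω G i θ x)
  have hhit : (θ', ((y + K - ε / 2 : ℝ) : T1)) ∈ U := by
    convert hi using 2
    · rw [hθ', succ_nsmul', add_assoc]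
    · congr 1
      push_cast [hy]
      ring
  have hlift : y ≤ orbitHeight ω F ρ θ' x' := by
    have hle := h.orbitHeight_add_le_of_le hF (G := G)
      (fun θ x => (le_add_of_nonneg_right hε.le).trans (hFG θ x)) i θ x
    have hle' := h.orbitHeight_add_le (θ + i • (ω : T1)) (fiberIter ω G i θ x)
    rw [add_assoc θ, ← succ_nsmul] at hle'
    push_cast [y]
    linarith
  have hx' : y + K - ε / 2 < x' := by
    refine (h.monotone_orbitHeight hF θ').reflect_lt ?_
    linarith [hlow _ _ hhit]
  calc y + ε / 2 ≤ x' + ε - K := by linarith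
    _ ≤ fiberIter ω G (i + 1) θ x - K := by
      rw [fiberIter_succ']
      gcongr
      exact hFG _ _
    _ ≤ orbitHeight ω F ρ θ' (fiberIter ω G (i + 1) θ x) := hK _ _

theorem lt_of_hasRotNum (h : DriftBddBelow ω F ρ) (hF : IsQpfLift ω F) {ε : ℝ} (hε : 0 < ε)
    (hFG : ∀ θ x, F θ x + ε ≤ G θ x)
    (hdense : DenseRange fun n : ℕ => n • ((ω, ρ) : T1 × T1)) (hσ : HasRotNum ω G σ) : ρ < σ := by
  obtain ⟨N, hN⟩ := h.exists_forall_exists_orbitHeight_gain hF hε hFG hdense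
  refine lt_of_tendsto_div_of_forall_exists_gain (N := N)
    (a := fun n => fiberIter ω G n 0 0)
    (b := fun n => orbitHeight ω F ρ (0 + n • (ω : T1)) (fiberIter ω G n 0 0)) (half_pos hε)
    (fun _ => h.orbitHeight_le_self _ _) (by simpa only [sub_zero] using hσ 0 0) fun n => ?_
  obtain ⟨j, hj, hjN, hgain⟩ := hN (0 + n • (ω : T1)) (fiberIter ω G n 0 0)
  exact ⟨j, hj, hjN, by rwa [fiberIter_add, add_nsmul, ← add_assoc]⟩

end DriftBddBelow

theorem HasRotNum.le_of_le (hρ : HasRotNum ω F ρ) (hG : IsQpfLift ω G)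
    (hFG : ∀ θ x, F θ x ≤ G θ x) (hσ : HasRotNum ω G σ) : ρ ≤ σ :=
  le_of_tendsto_of_tendsto' (hρ 0 0) (hσ 0 0) fun n => by
    gcongr
    exact hG.fiberIter_le_fiberIter hFG n 0 0

theorem HasRotNum.lt_of_lt (hρ : HasRotNum ω F ρ) (hF : IsQpfLift ω F) (hG : IsQpfLift ω G)
    (hFG : ∀ θ x, F θ x < G θ x) (hσ : HasRotNum ω G σ)
    (hdense : DenseRange fun n : ℕ => n • ((ω, ρ) : T1 × T1)) : ρ < σ := by
  obtain ⟨ε, hε, hgap⟩ := hF.exists_pos_forall_add_le hG hFG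
  have hdrift : DriftBddBelow ω (fun θ x => F θ x + ε / 2) ρ :=
    driftBddBelow_of_lt hF (hF.add_const (ε / 2)) (fun _ _ => lt_add_of_pos_right _ (half_pos hε))
      hρ hdense
  refine hdrift.lt_of_hasRotNum (hF.add_const (ε / 2)) (half_pos hε) (fun θ x => ?_) hdense hσ
  rw [add_assoc, add_halves]
  exact hgap θ x

end FiberedDynamics

theorem family_locking_rationally_dependent_general {ω ρ : ℝ} {F G : T1 → ℝ → ℝ}
    (hF : IsQpfLift ω F) (hG : IsQpfLift ω G) (hFG : ∀ θ x, F θ x < G θ x)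
    (hρF : HasRotNum ω F ρ) (hρG : HasRotNum ω G ρ) :
    ∃ a b c : ℤ, ¬(a = 0 ∧ b = 0 ∧ c = 0) ∧ (a : ℝ) * ω + (b : ℝ) * ρ + (c : ℝ) = 0 := by
  by_contra hindep
  have hlin : LinearIndependent ℤ ![ω, ρ, 1] := by
    refine Fintype.linearIndependent_iff.2 fun m hm => ?_
    have hzero : m 0 = 0 ∧ m 1 = 0 ∧ m 2 = 0 := by
      by_contra hne
      exact hindep ⟨m 0, m 1, m 2, hne, by simpa [Fin.sum_univ_three] using hm⟩
    exact Fin.forall_fin_succ.2 ⟨hzero.1, Fin.forall_fin_two.2 hzero.2⟩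
  exact lt_irrefl ρ (hρF.lt_of_lt hF hG hFG hρG
    (denseRange_nsmul_of_linearIndependent hlin))

/-- Corollary of Theorem A: in a continuous, strictly monotone parameter
family, the fibered rotation number can only stay constant at a parameter `τ₀` if `ω`,
`ρ(τ₀)` and `1` are rationally dependent. -/
theorem family_locking_rationally_dependent
    (ω : ℝ) (hω : Irrational ω)
    (F : ℝ → T1 → ℝ → ℝ)
    (hlift : ∀ τ, IsQpfLift ω (F τ))
    (hcont : Continuous fun p : ℝ × T1 × ℝ => F p.1 p.2.1 p.2.2)
    (hmono : ∀ τ τ' : ℝ, τ < τ' → ∀ (θ : T1) (x : ℝ), F τ θ x < F τ' θ x)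
    (ρ : ℝ → ℝ) (hρ : ∀ τ, HasRotNum ω (F τ) (ρ τ))
    (τ₀ τ₁ τ₂ : ℝ) (h₁ : τ₁ < τ₀) (h₂ : τ₀ < τ₂) (heq : ρ τ₁ = ρ τ₂) :
    ∃ a b c : ℤ, ¬(a = 0 ∧ b = 0 ∧ c = 0) ∧ (a : ℝ) * ω + (b : ℝ) * ρ τ₀ + (c : ℝ) = 0 := by
  have hle {τ τ' : ℝ} (h : τ < τ') : ρ τ ≤ ρ τ' :=
    (hρ τ).le_of_le (hlift τ') (fun θ x => (hmono τ τ' h θ x).le) (hρ τ')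
  have hlocked : ρ τ₁ = ρ τ₀ := (hle h₁).antisymm ((hle h₂).trans_eq heq.symm)
  exact family_locking_rationally_dependent_general (hlift τ₁) (hlift τ₀) (hmono τ₁ τ₀ h₁)
    (hlocked ▸ hρ τ₁) (hρ τ₀)
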